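/- Let n ≥ 1, let w ∈ EuclideanSpace ℝ (Fin n) with ‖w‖ = 1, and let b, a ∈ ℝ. Let μ be the uniform probability measure on the closed unit ball of EuclideanSpace ℝ (Fin n) (Lebesgue measure restricted to the ball, normalized by the ball's volume π^(n/2)/Γ(n/2 + 1)). Then, writing v(x) = ⟪w, x⟫ + b, one has μ {x : (0 ≤ v(x) ∧ v(x) + a < 0) ∨ (v(x) < 0 ∧ 0 ≤ v(x) + a)} ≤ C · |a|, where C = 2^(n-1) · Γ(n/2 + 1) / π^(n/2). -/

import Mathlib

open RealInnerProductSpace MeasureTheory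

/-!
In the coordinates of an orthonormal basis containing `w`, the part of a ball of radius `r` where
`⟪w, x⟫` lies in `s` sits in a box with one side `s` and all the others of length `2 * r`. The sign
of `⟪w, x⟫ + b` changes when `a` is added only if `⟪w, x⟫` lies in an interval of length `|a|`.
Dividing the volume of the box by the volume of the ball gives the bound.
-/

open Module ProbabilityTheory

theorem nontrivial_of_norm_eq_one {E : Type*} [NormedAddGroup E] {w : E} (hw : ‖w‖ = 1) :
    Nontrivial E :=
  nontrivial_of_ne w 0 (norm_ne_zero_iff.1 (hw ▸ one_ne_zero))

section InnerProductSpace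

variable {E : Type*} [NormedAddCommGroup E] [InnerProductSpace ℝ E]

theorem exists_orthonormalBasis_apply_eq [FiniteDimensional ℝ E] {w : E} (hw : ‖w‖ = 1) :
    ∃ (B : OrthonormalBasis (Fin (finrank ℝ E)) ℝ E) (i : Fin (finrank ℝ E)), B i = w := by
  have : Nontrivial E := nontrivial_of_norm_eq_one hw
  let i : Fin (finrank ℝ E) := ⟨0, finrank_pos⟩
  have h_orthonormal : Orthonormal ℝ (({i} : Set (Fin (finrank ℝ E))).domRestrict fun _ => w) :=
    orthonormal_subsingleton_iff.2 fun _ => hw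
  obtain ⟨B, hB⟩ := h_orthonormal.exists_orthonormalBasis_extension_of_card_eq (by simp)
  exact ⟨B, i, hB i rfl⟩

theorem inner_mem_Icc_of_mem_closedBall {u : E} (hu : ‖u‖ = 1) {c x : E} {r : ℝ}
    (hx : x ∈ Metric.closedBall c r) : ⟪u, x⟫ ∈ Set.Icc (⟪u, c⟫ - r) (⟪u, c⟫ + r) := by
  have h_dist : |⟪u, x⟫ - ⟪u, c⟫| ≤ r := calc
    |⟪u, x⟫ - ⟪u, c⟫| = |⟪u, x - c⟫| := by rw [inner_sub_right]
    _ ≤ ‖u‖ * ‖x - c‖ := abs_real_inner_le_norm u (x - c)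
    _ = ‖x - c‖ := by rw [hu, one_mul]
    _ ≤ r := mem_closedBall_iff_norm.1 hx
  rwa [← Real.closedBall_eq_Icc, Metric.mem_closedBall, Real.dist_eq]

variable [FiniteDimensional ℝ E] [MeasurableSpace E] [BorelSpace E]

theorem volume_setOf_forall_inner_mem {ι : Type*} [Fintype ι] (B : OrthonormalBasis ι ℝ E)
    (s : ι → Set ℝ) : volume {x | ∀ i, ⟪B i, x⟫ ∈ s i} = ∏ i, volume (s i) := by
  let e : E ≃ᵐ (ι → ℝ) := B.measurableEquiv.trans (MeasurableEquiv.toLp 2 (ι → ℝ)).symm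
  have he : MeasurePreserving e volume volume :=
    (EuclideanSpace.volume_preserving_symm_measurableEquiv_toLp ι).comp
      B.measurePreserving_measurableEquiv
  have h_preimage : {x | ∀ i, ⟪B i, x⟫ ∈ s i} = e ⁻¹' Set.univ.pi s := by
    ext x
    simp only [Set.mem_ofPred_eq, Set.mem_preimage, Set.mem_univ_pi, ← B.repr_apply_apply]
    rfl
  rw [h_preimage, he.measure_preimage_equiv, volume_pi_pi]

theorem volume_closedBall_inter_inner_mem_le {w : E} (hw : ‖w‖ = 1) (c : E) (r : ℝ) (s : Set ℝ) :
    volume (Metric.closedBall c r ∩ {x | ⟪w, x⟫ ∈ s})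
      ≤ ENNReal.ofReal (2 * r) ^ (finrank ℝ E - 1) * volume s := by
  obtain ⟨B, i₀, rfl⟩ := exists_orthonormalBasis_apply_eq hw
  let side : Fin (finrank ℝ E) → Set ℝ :=
    Function.update (fun i => Set.Icc (⟪B i, c⟫ - r) (⟪B i, c⟫ + r)) i₀ s
  have h_side_self : side i₀ = s := Function.update_self ..
  have h_side_of_ne : ∀ i ≠ i₀, side i = Set.Icc (⟪B i, c⟫ - r) (⟪B i, c⟫ + r) :=
    fun _ hi => Function.update_of_ne hi ..
  have h_subset : Metric.closedBall c r ∩ {x | ⟪B i₀, x⟫ ∈ s} ⊆ {x | ∀ i, ⟪B i, x⟫ ∈ side i} := by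
    rintro x ⟨hx_ball, hx_s⟩ i
    obtain rfl | hi := eq_or_ne i i₀
    · exact h_side_self ▸ hx_s
    · exact h_side_of_ne i hi ▸ inner_mem_Icc_of_mem_closedBall (B.norm_eq_one i) hx_ball
  have h_volume_side : ∀ i ∈ Finset.univ.erase i₀, volume (side i) = ENNReal.ofReal (2 * r) := by
    intro i hi
    rw [h_side_of_ne i (Finset.ne_of_mem_erase hi), Real.volume_Icc]
    ring_nf
  calc volume (Metric.closedBall c r ∩ {x | ⟪B i₀, x⟫ ∈ s})
      ≤ volume {x | ∀ i, ⟪B i, x⟫ ∈ side i} := measure_mono h_subset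
    _ = ∏ i, volume (side i) := volume_setOf_forall_inner_mem B side
    _ = (∏ i ∈ Finset.univ.erase i₀, volume (side i)) * volume (side i₀) :=
        (Finset.prod_erase_mul _ _ (Finset.mem_univ i₀)).symm
    _ = ENNReal.ofReal (2 * r) ^ (finrank ℝ E - 1) * volume s := by
        rw [Finset.prod_congr rfl h_volume_side, Finset.prod_const,
          Finset.card_erase_of_mem (Finset.mem_univ i₀), Finset.card_fin, h_side_self]

theorem cond_closedBall_eq_smul_restrict [Nontrivial E] (c : E) {r : ℝ} (hr : 0 ≤ r) :
    volume[|Metric.closedBall c r] =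
      (ENNReal.ofReal (r ^ finrank ℝ E * (Real.pi ^ ((finrank ℝ E : ℝ) / 2) /
        Real.Gamma ((finrank ℝ E : ℝ) / 2 + 1))))⁻¹ • volume.restrict (Metric.closedBall c r) := by
  have h_sqrt_pi : √Real.pi ^ finrank ℝ E = Real.pi ^ ((finrank ℝ E : ℝ) / 2) := by
    rw [Real.sqrt_eq_rpow, ← Real.rpow_natCast, ← Real.rpow_mul Real.pi_pos.le]
    ring_nf
  rw [ProbabilityTheory.cond, InnerProductSpace.volume_closedBall, h_sqrt_pi,
    ENNReal.ofReal_mul (by positivity), ENNReal.ofReal_pow hr]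

theorem cond_closedBall_inner_mem_le {w : E} (hw : ‖w‖ = 1) (c : E) {r : ℝ} (hr : 0 < r)
    (s : Set ℝ) :
    volume[{x | ⟪w, x⟫ ∈ s} | Metric.closedBall c r] ≤
      ENNReal.ofReal (2 ^ (finrank ℝ E - 1) * Real.Gamma ((finrank ℝ E : ℝ) / 2 + 1) /
        Real.pi ^ ((finrank ℝ E : ℝ) / 2) / r) * volume s := by
  have : Nontrivial E := nontrivial_of_norm_eq_one hw
  rw [cond_closedBall_eq_smul_restrict c hr.le, Measure.smul_apply, smul_eq_mul,
    Measure.restrict_apply' measurableSet_closedBall, Set.inter_comm,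
    ← ENNReal.ofReal_inv_of_pos (by positivity)]
  refine (mul_le_mul_right (volume_closedBall_inter_inner_mem_le hw c r s) _).trans_eq ?_
  rw [← mul_assoc, ← ENNReal.ofReal_pow (by positivity), ← ENNReal.ofReal_mul (by positivity)]
  congr 2
  rw [mul_pow, ← pow_sub_one_mul finrank_pos.ne' r]
  field_simp

end InnerProductSpace

theorem volume_setOf_sign_change_le (b a : ℝ) :
    volume {t : ℝ | (0 ≤ t + b ∧ t + b + a < 0) ∨ (t + b < 0 ∧ 0 ≤ t + b + a)}
      ≤ ENNReal.ofReal |a| := by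
  have h_subset : {t : ℝ | (0 ≤ t + b ∧ t + b + a < 0) ∨ (t + b < 0 ∧ 0 ≤ t + b + a)}
      ⊆ Set.uIcc (-b) (-b - a) := by
    rintro t (⟨h_nonneg, h_neg⟩ | ⟨h_neg, h_nonneg⟩)
    · exact Set.mem_uIcc.2 (.inl ⟨by linarith, by linarith⟩)
    · exact Set.mem_uIcc.2 (.inr ⟨by linarith, by linarith⟩)
  calc volume {t : ℝ | (0 ≤ t + b ∧ t + b + a < 0) ∨ (t + b < 0 ∧ 0 ≤ t + b + a)}
      ≤ volume (Set.uIcc (-b) (-b - a)) := measure_mono h_subset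
    _ = ENNReal.ofReal |a| := by rw [Real.volume_interval, sub_sub_cancel_left, abs_neg]

theorem score_function_bound_general {E : Type*} [NormedAddCommGroup E] [InnerProductSpace ℝ E]
    [FiniteDimensional ℝ E] [MeasurableSpace E] [BorelSpace E]
    {w : E} (hw : ‖w‖ = 1) (c : E) {r : ℝ} (hr : 0 < r) (b a : ℝ) :
    volume[{x | (0 ≤ ⟪w, x⟫ + b ∧ ⟪w, x⟫ + b + a < 0) ∨ (⟪w, x⟫ + b < 0 ∧ 0 ≤ ⟪w, x⟫ + b + a)} |
        Metric.closedBall c r] ≤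
      ENNReal.ofReal (2 ^ (finrank ℝ E - 1) * Real.Gamma ((finrank ℝ E : ℝ) / 2 + 1) /
        Real.pi ^ ((finrank ℝ E : ℝ) / 2) / r * |a|) := by
  rw [ENNReal.ofReal_mul' (abs_nonneg a)]
  exact (cond_closedBall_inner_mem_le hw c hr _).trans
    (mul_le_mul_right (volume_setOf_sign_change_le b a) _)

theorem score_function_bound
    {n : ℕ} (hn : 1 ≤ n)
    (w : EuclideanSpace ℝ (Fin n)) (hw : ‖w‖ = 1) (b a : ℝ)
    (μ : Measure (EuclideanSpace ℝ (Fin n)))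
    (hμ : μ = (ENNReal.ofReal (Real.pi ^ ((n : ℝ) / 2) / Real.Gamma ((n : ℝ) / 2 + 1)))⁻¹ •
            volume.restrict (Metric.closedBall (0 : EuclideanSpace ℝ (Fin n)) 1))
    (v : EuclideanSpace ℝ (Fin n) → ℝ) (hv : ∀ x, v x = ⟪w, x⟫ + b)
    (C : ℝ) (hC : C = 2 ^ (n - 1) * Real.Gamma ((n : ℝ) / 2 + 1) / Real.pi ^ ((n : ℝ) / 2)) :
    μ {x | (0 ≤ v x ∧ v x + a < 0) ∨ (v x < 0 ∧ 0 ≤ v x + a)}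
      ≤ ENNReal.ofReal (C * |a|) := by
  obtain rfl : v = fun x => ⟪w, x⟫ + b := funext hv
  have : Nontrivial (EuclideanSpace ℝ (Fin n)) := nontrivial_of_norm_eq_one hw
  simpa only [hμ, hC, cond_closedBall_eq_smul_restrict _ zero_le_one, finrank_euclideanSpace_fin,
    one_pow, one_mul, div_one] using score_function_bound_general hw 0 one_pos b a
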